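/- arXiv:1708.03286 — 2 statements merged into one kernel-verified Lean document; each statement's English description precedes it below -/
import Mathlib

section
/- Let η₂ > η₁ > 0, 0 < α < π/2, θ ∈ ℝ, and ñ = (cos θ, sin θ). Then there exist F̃ ∈ K̃, Ã ∈ K̃^pc·R̃_α and ã ∈ ℝ² with F̃ − Ã = ã⊗ñ if and only if |cos 2θ| ≤ f(|cos 2(α + θ)|). -/
/-!
Write `M = (η₁² + η₂²)/2`, `D = (η₂² - η₁²)/2`, `φ = α + θ`, and let `t = (-sin θ, cos θ)` be the
interface direction. For fixed Gram matrices, `F - A = a ⊗ n` is solvable, up to the choice of a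
rotation on the left of `F`, exactly when `|F t| = |A t|` (`exists_compatible`). For the two wells
`|F t|² = M ∓ D cos 2θ`. If `A = B R_α` and `BᵀB` has entries `a = m + r`, `b = m - r`, `c`, then
`|A t|² = m - r cos 2φ - c sin 2φ`, where `m² = r² + c² + (M² - D²)` and `m + |c| ≤ M`.

So everything reduces to the range of this function on `P`, which is the interval
`[M - D f(s), M + D s]` with `s = |cos 2φ|`. The upper bound uses `m ≤ M - |c|` and `|r| ≤ D`.
For the lower bound, put `p = m + |c| ≤ M` and complete the square in `|r|` when `s ≤ s*`; for
`s > s*` linearise `m` at the well `|r| = D`, `c = 0`. All values are attained along the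
boundary arc `m + |c| = M`, where the function is a quadratic polynomial in `r`, by the
intermediate value theorem. Finally `f(s) ≥ s` shows that `M + D cos 2θ` or `M - D cos 2θ` lies
in the interval exactly when `|cos 2θ| ≤ f(s)`.
-/

open Matrix

/-- A real 2×2 matrix is a rotation (element of SO(2)). -/
def IsSO2 (R : Matrix (Fin 2) (Fin 2) ℝ) : Prop :=
  Rᵀ * R = 1 ∧ R.det = 1

/-- The 2×2 rotation matrix through angle α. -/
noncomputable def rot2 (α : ℝ) : Matrix (Fin 2) (Fin 2) ℝ :=
  !![Real.cos α, -Real.sin α; Real.sin α, Real.cos α]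

/-- The set P = {(a,b,c) : a>0, b>0, ab−c² = η₁²η₂², a+b+2|c| ≤ η₁²+η₂²}. -/
def Pset (η₁ η₂ : ℝ) : Set (ℝ × ℝ × ℝ) :=
  {p | 0 < p.1 ∧ 0 < p.2.1 ∧ p.1 * p.2.1 - p.2.2 ^ 2 = η₁ ^ 2 * η₂ ^ 2 ∧
       p.1 + p.2.1 + 2 * |p.2.2| ≤ η₁ ^ 2 + η₂ ^ 2}

/-- The two-well set K̃ = SO(2)Ũ₁ ∪ SO(2)Ũ₂. -/
def Ktilde (η₁ η₂ : ℝ) : Set (Matrix (Fin 2) (Fin 2) ℝ) :=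
  {F | ∃ R : Matrix (Fin 2) (Fin 2) ℝ, IsSO2 R ∧
    (F = R * Matrix.diagonal ![η₂, η₁] ∨ F = R * Matrix.diagonal ![η₁, η₂])}

/-- The polyconvexification K̃^pc of the two-well set K̃. -/
def Kpc (η₁ η₂ : ℝ) : Set (Matrix (Fin 2) (Fin 2) ℝ) :=
  {A | 0 < A.det ∧ ∃ a b c : ℝ, (a, b, c) ∈ Pset η₁ η₂ ∧ Aᵀ * A = !![a, c; c, b]}

/-- The function f of the characterization theorem, with parameter τ. -/
noncomputable def fBC (τ s : ℝ) : ℝ :=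
  if s ≤ (τ ^ 4 - 1) / (τ ^ 4 + 1) then
    (τ ^ 4 + 1 - 2 * τ ^ 2 * Real.sqrt (1 - s ^ 2)) / (τ ^ 4 - 1)
  else s

/-! ### The function `f` -/

/-- The two regimes of `fBC`. In the first one, `M - D f` is put in the form
`(M² - D²)(1 + Y) / (2M)`, the value at the interior critical point of the boundary arc. -/
lemma fBC_cases {η₁ η₂ M D X Y : ℝ} (h1 : 0 < η₁) (h2 : η₁ < η₂)
    (hM : M = (η₁ ^ 2 + η₂ ^ 2) / 2) (hD : D = (η₂ ^ 2 - η₁ ^ 2) / 2)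
    (hY : 0 ≤ Y) (hXY : X ^ 2 + Y ^ 2 = 1) :
    (X * (M ^ 2 + D ^ 2) ≤ 2 * D * M ∧
      (M - D * fBC (η₂ / η₁) X) * (2 * M) = (M ^ 2 - D ^ 2) * (1 + Y)) ∨
    (2 * D * M < X * (M ^ 2 + D ^ 2) ∧ fBC (η₂ / η₁) X = X) := by
  have hsq : Real.sqrt (1 - X ^ 2) = Y := by
    rw [show 1 - X ^ 2 = Y ^ 2 by linarith, Real.sqrt_sq hY]
  have h4 : 0 < η₂ ^ 4 - η₁ ^ 4 := by
    have : η₁ ^ 4 < η₂ ^ 4 := by gcongr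
    linarith
  have hs : ((η₂ / η₁) ^ 4 - 1) / ((η₂ / η₁) ^ 4 + 1) = 2 * D * M / (M ^ 2 + D ^ 2) := by
    have : M ^ 2 + D ^ 2 = (η₂ ^ 4 + η₁ ^ 4) / 2 := by subst hM hD; ring
    rw [this]
    have : 2 * D * M = (η₂ ^ 4 - η₁ ^ 4) / 2 := by subst hM hD; ring
    rw [this]
    have hp : 0 < η₂ ^ 4 + η₁ ^ 4 := by positivity
    field_simp
  have hpos : 0 < M ^ 2 + D ^ 2 := by
    have : 0 < M := by subst hM; positivity
    positivity
  unfold fBC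
  simp only [hs, hsq, le_div_iff₀ hpos]
  by_cases h : X * (M ^ 2 + D ^ 2) ≤ 2 * D * M
  · left
    refine ⟨h, ?_⟩
    rw [if_pos h]
    have e : ((η₂ / η₁) ^ 4 + 1 - 2 * (η₂ / η₁) ^ 2 * Y) / ((η₂ / η₁) ^ 4 - 1)
        = (η₂ ^ 4 + η₁ ^ 4 - 2 * η₂ ^ 2 * η₁ ^ 2 * Y) / (η₂ ^ 4 - η₁ ^ 4) := by
      have e1 : (η₂ / η₁) ^ 4 - 1 = (η₂ ^ 4 - η₁ ^ 4) / η₁ ^ 4 := by field_simp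
      have e2 : (η₂ / η₁) ^ 4 + 1 - 2 * (η₂ / η₁) ^ 2 * Y
          = (η₂ ^ 4 + η₁ ^ 4 - 2 * η₂ ^ 2 * η₁ ^ 2 * Y) / η₁ ^ 4 := by field_simp
      rw [e1, e2]
      have : η₁ ^ 4 ≠ 0 := by positivity
      exact div_div_div_cancel_right₀ this _ _
    rw [e]
    have h4' : η₂ ^ 4 - η₁ ^ 4 ≠ 0 := h4.ne'
    have e3 : D * ((η₂ ^ 4 + η₁ ^ 4 - 2 * η₂ ^ 2 * η₁ ^ 2 * Y) / (η₂ ^ 4 - η₁ ^ 4)) * (2 * M)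
        = (η₂ ^ 4 + η₁ ^ 4 - 2 * η₂ ^ 2 * η₁ ^ 2 * Y) / 2 := by
      have : η₂ ^ 4 - η₁ ^ 4 = 4 * D * M := by subst hM hD; ring
      rw [this] at h4' ⊢
      have : D ≠ 0 := by rintro rfl; simp at h4'
      have : M ≠ 0 := by rintro rfl; simp at h4'
      field_simp
      ring
    rw [sub_mul, e3]
    subst hM hD
    ring
  · right
    rw [if_neg h]
    exact ⟨not_le.1 h, rfl⟩

/-- `f(s) ≥ s`; in the regime `s ≤ s*` the difference is a positive multiple of a
perfect square. -/
lemma le_fBC {η₁ η₂ M D X Y : ℝ} (h1 : 0 < η₁) (h2 : η₁ < η₂)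
    (hM : M = (η₁ ^ 2 + η₂ ^ 2) / 2) (hD : D = (η₂ ^ 2 - η₁ ^ 2) / 2)
    (hY : 0 ≤ Y) (hXY : X ^ 2 + Y ^ 2 = 1) : X ≤ fBC (η₂ / η₁) X := by
  have hM0 : 0 < M := by subst hM; positivity
  have hD0 : 0 < D := by subst hD; nlinarith
  rcases fBC_cases h1 h2 hM hD hY hXY with ⟨-, h⟩ | ⟨-, h⟩
  · have key : 0 ≤ (1 + Y) * (2 * M * (M - D * X) - (M ^ 2 - D ^ 2) * (1 + Y)) := by
      have : (1 + Y) * (2 * M * (M - D * X) - (M ^ 2 - D ^ 2) * (1 + Y))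
          = (M * X - D * (1 + Y)) ^ 2 := by
        linear_combination (-M ^ 2) * hXY
      rw [this]; positivity
    have k2 := nonneg_of_mul_nonneg_right key (by linarith)
    rw [← h] at k2
    have k3 : 0 ≤ (2 * M * D) * (fBC (η₂ / η₁) X - X) := by linarith
    have := nonneg_of_mul_nonneg_right k3 (by positivity)
    linarith
  · rw [h]

/-! ### Range of the squared stretch on `P` -/

/-- Bounds for `m - r x - c y` on `P`, in the coordinates `a = m + r`, `b = m - r`. -/
lemma value_bounds {η₁ η₂ M D x y m r c : ℝ} (h1 : 0 < η₁) (h2 : η₁ < η₂)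
    (hM : M = (η₁ ^ 2 + η₂ ^ 2) / 2) (hD : D = (η₂ ^ 2 - η₁ ^ 2) / 2)
    (hxy : x ^ 2 + y ^ 2 = 1) (hm : 0 < m) (hdet : m ^ 2 = r ^ 2 + c ^ 2 + (M ^ 2 - D ^ 2))
    (hle : m + |c| ≤ M) :
    M - D * fBC (η₂ / η₁) |x| ≤ m - r * x - c * y ∧ m - r * x - c * y ≤ M + D * |x| := by
  have hM0 : 0 < M := by subst hM; positivity
  have hD0 : 0 < D := by subst hD; nlinarith
  have hMD : 0 < M - D := by subst hM hD; ring_nf; positivity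
  have hX := abs_nonneg x
  have hY := abs_nonneg y
  have hXY : |x| ^ 2 + |y| ^ 2 = 1 := by simpa using hxy
  have hR := abs_nonneg r
  have hC := abs_nonneg c
  have hdet' : m ^ 2 = |r| ^ 2 + |c| ^ 2 + (M ^ 2 - D ^ 2) := by simpa using hdet
  have hrx : |r * x| = |r| * |x| := abs_mul r x
  have hcy : |c * y| = |c| * |y| := abs_mul c y
  have b1 := abs_le.1 hrx.le
  have b2 := abs_le.1 hcy.le
  generalize |x| = X at *
  generalize |y| = Y at *
  generalize |r| = R at *
  generalize |c| = C at *
  have hY1 : Y ≤ 1 := by nlinarith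
  have hd : 0 < M ^ 2 - D ^ 2 := by
    have : 0 < (M + D) * (M - D) := by positivity
    linarith
  -- squaring `m ≤ M - C` eliminates `m`
  have hRC : R ^ 2 + 2 * M * C ≤ D ^ 2 := by
    have : m ^ 2 ≤ (M - C) ^ 2 := pow_le_pow_left₀ hm.le (by linarith) 2
    linarith
  have hRD : R ≤ D := by
    refine le_of_sq_le_sq ?_ hD0.le
    have := mul_nonneg hM0.le hC
    linarith
  constructor
  · suffices h : M - D * fBC (η₂ / η₁) X ≤ m - R * X - C * Y by linarith
    rcases fBC_cases h1 h2 hM hD hY hXY with ⟨-, h⟩ | ⟨hs, h⟩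
    · have hg : 2 * (m + C) * (1 + Y) * (m - R * X - C * Y)
          = (1 + Y) ^ 2 * (M ^ 2 - D ^ 2) + ((1 + Y) * R - (m + C) * X) ^ 2 := by
        linear_combination ((1 + Y) ^ 2) * hdet' - (m + C) ^ 2 * hXY
      have hp : 0 < m + C := by linarith
      have hg2 : (1 + Y) * (M ^ 2 - D ^ 2) ≤ 2 * (m + C) * (m - R * X - C * Y) := by
        have : 0 ≤ (1 + Y) *
            (2 * (m + C) * (m - R * X - C * Y) - (1 + Y) * (M ^ 2 - D ^ 2)) := by
          have := sq_nonneg ((1 + Y) * R - (m + C) * X)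
          linarith
        have := nonneg_of_mul_nonneg_right this (by linarith)
        linarith
      have hgpos : 0 ≤ m - R * X - C * Y := by
        have : 0 ≤ (2 * (m + C)) * (m - R * X - C * Y) :=
          le_trans (by positivity) hg2
        exact nonneg_of_mul_nonneg_right this (by linarith)
      have : (M - D * fBC (η₂ / η₁) X) * (2 * M) ≤ (m - R * X - C * Y) * (2 * M) := by
        rw [h]
        have := mul_le_mul_of_nonneg_right hle hgpos
        linarith
      exact le_of_mul_le_mul_right this (by linarith)
    · rw [h]
      have hs' : D * (1 + Y) ≤ M * X := by
        by_contra! hcon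
        have hDM : D * (M ^ 2 + D ^ 2) ≤ 2 * D * M * M := by
          have : 0 ≤ D * ((M - D) * (M + D)) := by positivity
          linarith
        have h5 : D * (M ^ 2 + D ^ 2) < (M * X) * (M ^ 2 + D ^ 2) := by
          linear_combination hDM + M * hs
        have h6 : D < M * X := lt_of_mul_lt_mul_right h5 (by positivity)
        have h7 : (M * X - D) ^ 2 < (D * Y) ^ 2 := by
          apply pow_lt_pow_left₀ _ (by linarith) (by norm_num)
          linarith
        have h8 : X * (X * (M ^ 2 + D ^ 2)) < X * (2 * D * M) := by
          linear_combination h7 + D ^ 2 * hXY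
        have := lt_of_mul_lt_mul_left h8 hX
        linarith
      -- Cauchy–Schwarz for `(√(M² - D²), R)` and `(√(M² - D²), D)`: the tangent to `m` at `R = D`, `C = 0`
      have hcs : (M ^ 2 - D ^ 2) + D * R ≤ M * m := by
        apply abs_le_of_sq_le_sq' _ (by positivity) |>.2
        have : (M * m) ^ 2 - (M ^ 2 - D ^ 2 + D * R) ^ 2
            = (M ^ 2 - D ^ 2) * (R - D) ^ 2 + M ^ 2 * C ^ 2 := by
          linear_combination M ^ 2 * hdet'
        have : 0 ≤ (M ^ 2 - D ^ 2) * (R - D) ^ 2 + M ^ 2 * C ^ 2 := by positivity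
        linarith
      have hC2 : M * C ≤ D * (D - R) := by
        have := sq_nonneg (D - R)
        linarith
      have e1 : M * C * Y ≤ D * (D - R) * Y := mul_le_mul_of_nonneg_right hC2 hY
      have e2 : D * (1 + Y) * (D - R) ≤ M * X * (D - R) :=
        mul_le_mul_of_nonneg_right hs' (by linarith)
      have : M * (M - D * X) ≤ M * (m - R * X - C * Y) := by
        linear_combination hcs + e1 + e2
      exact le_of_mul_le_mul_left this hM0
  · have e1 : R * X ≤ D * X := mul_le_mul_of_nonneg_right hRD hX
    have e2 : C * Y ≤ C := mul_le_of_le_one_right hC hY1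
    linarith

/-- Every value in `[M - D f(|x|), M + D |x|]` is attained on the boundary arc `m + |c| = M`. -/
lemma value_attained {η₁ η₂ M D x y v : ℝ} (h1 : 0 < η₁) (h2 : η₁ < η₂)
    (hM : M = (η₁ ^ 2 + η₂ ^ 2) / 2) (hD : D = (η₂ ^ 2 - η₁ ^ 2) / 2)
    (hxy : x ^ 2 + y ^ 2 = 1) (hv : M - D * fBC (η₂ / η₁) |x| ≤ v) (hv' : v ≤ M + D * |x|) :
    ∃ m r c : ℝ, 0 < m ∧ m ^ 2 = r ^ 2 + c ^ 2 + (M ^ 2 - D ^ 2) ∧ m + |c| ≤ M ∧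
      m - r * x - c * y = v := by
  have hM0 : 0 < M := by subst hM; positivity
  have hD0 : 0 < D := by subst hD; nlinarith
  have hMD : 0 < M - D := by subst hM hD; ring_nf; positivity
  have hX := abs_nonneg x
  have hY := abs_nonneg y
  have hXY : |x| ^ 2 + |y| ^ 2 = 1 := by simpa using hxy
  obtain ⟨σ, hσ, hσx⟩ : ∃ σ : ℝ, σ ^ 2 = 1 ∧ σ * x = |x| := by
    rcases abs_choice x with h | h
    · exact ⟨1, by norm_num, by rw [h]; ring⟩
    · exact ⟨-1, by norm_num, by rw [h]; ring⟩
  obtain ⟨ρ, hρ, hρy⟩ : ∃ ρ : ℝ, ρ ^ 2 = 1 ∧ ρ * y = |y| := by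
    rcases abs_choice y with h | h
    · exact ⟨1, by norm_num, by rw [h]; ring⟩
    · exact ⟨-1, by norm_num, by rw [h]; ring⟩
  have hρ1 : |ρ| = 1 := by
    rcases sq_eq_one_iff.1 hρ with h | h <;> simp [h]
  generalize |x| = X at *
  generalize |y| = Y at *
  -- the minimum over the arc, at the critical point `M X / (1 + Y)` or at the end point `D`
  obtain ⟨r₁, hr0, hrD, hr⟩ : ∃ r₁ : ℝ, -D ≤ r₁ ∧ r₁ ≤ D ∧
      M - (D ^ 2 - r₁ ^ 2) / (2 * M) * (1 + Y) - r₁ * X = M - D * fBC (η₂ / η₁) X := by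
    rcases fBC_cases h1 h2 hM hD hY hXY with ⟨hs, h⟩ | ⟨hs, h⟩
    · have hY1 : 0 < 1 + Y := by linarith
      have h0 : 0 ≤ M * X / (1 + Y) := by positivity
      refine ⟨M * X / (1 + Y), by linarith, ?_, ?_⟩
      · rw [div_le_iff₀ hY1]
        by_contra! hcon
        have h7 : (D * Y) ^ 2 < (M * X - D) ^ 2 := by
          apply pow_lt_pow_left₀ _ (by positivity) (by norm_num)
          linarith
        have h8 : X * (2 * D * M) < X * (X * (M ^ 2 + D ^ 2)) := by
          linear_combination h7 - D ^ 2 * hXY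
        have := lt_of_mul_lt_mul_left h8 hX
        linarith
      · have : (M - (D ^ 2 - (M * X / (1 + Y)) ^ 2) / (2 * M) * (1 + Y) - M * X / (1 + Y) * X)
            * (2 * M) = (M - D * fBC (η₂ / η₁) X) * (2 * M) := by
          rw [h]
          field_simp
          linear_combination (-M ^ 2) * hXY
        exact mul_right_cancel₀ (by positivity) this
    · exact ⟨D, by linarith, le_rfl, by rw [h]; ring⟩
  have hcont : ContinuousOn
      (fun r : ℝ => M - (D ^ 2 - r ^ 2) / (2 * M) * (1 + Y) - r * X) (Set.Icc (-D) r₁) := by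
    fun_prop
  obtain ⟨r, ⟨hra, hrb⟩, hrv⟩ := intermediate_value_Icc' hr0 hcont
    (show v ∈ Set.Icc _ _ from ⟨by simp only [hr]; exact hv, by ring_nf; linarith⟩)
  simp only at hrv
  have hr2 : 0 ≤ D ^ 2 - r ^ 2 := by nlinarith
  have hq : 0 ≤ (D ^ 2 - r ^ 2) / (2 * M) := by positivity
  have hk : (D ^ 2 - r ^ 2) / (2 * M) * (2 * M) = D ^ 2 - r ^ 2 := by field_simp
  have hqM : (D ^ 2 - r ^ 2) / (2 * M) < M := by
    rw [div_lt_iff₀ (by positivity)]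
    nlinarith
  generalize (D ^ 2 - r ^ 2) / (2 * M) = q at *
  refine ⟨M - q, σ * r, ρ * q, by linarith, ?_, ?_, ?_⟩
  · linear_combination (-r ^ 2) * hσ - q ^ 2 * hρ - hk
  · rw [abs_mul, hρ1, abs_of_nonneg hq]; linarith
  · linear_combination hrv - r * hσx - q * hρy

/-! ### Rank-one compatibility of planar matrices -/

/-- If `(u, v)` and `(w, z)` have the same nonzero length, some rotation maps one to the other. -/
lemma exists_rotation {u v w z : ℝ} (h0 : 0 < u ^ 2 + v ^ 2)
    (h : u ^ 2 + v ^ 2 = w ^ 2 + z ^ 2) :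
    ∃ R : Matrix (Fin 2) (Fin 2) ℝ, IsSO2 R ∧ R *ᵥ ![u, v] = ![w, z] := by
  -- complex division of `w + i z` by `u + i v`
  set p := (u * w + v * z) / (u ^ 2 + v ^ 2) with hp
  set q := (u * z - v * w) / (u ^ 2 + v ^ 2) with hq
  have hne := h0.ne'
  have hpq : p ^ 2 + q ^ 2 = 1 := by
    rw [hp, hq]
    field_simp
    linear_combination (-(u ^ 2 + v ^ 2)) * h
  refine ⟨!![p, -q; q, p], ⟨?_, ?_⟩, ?_⟩
  · ext i j
    fin_cases i <;> fin_cases j <;> simp [Matrix.mul_apply, Fin.sum_univ_two] <;> linarith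
  · simp [Matrix.det_fin_two]; linarith
  · ext i
    fin_cases i <;> simp [Matrix.mulVec, dotProduct, Fin.sum_univ_two, hp, hq] <;> field_simp <;>
      ring

/-- A matrix killing `(-s, k)` has rank-one form with normal `(k, s)`. -/
lemma eq_vecMulVec_of_mulVec_eq_zero {X : Matrix (Fin 2) (Fin 2) ℝ} {k s : ℝ}
    (hks : s ^ 2 + k ^ 2 = 1) (h : X *ᵥ ![-s, k] = 0) :
    X = Matrix.vecMulVec (X *ᵥ ![k, s]) ![k, s] := by
  have h0 := congrFun h 0
  have h1 := congrFun h 1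
  simp [Matrix.mulVec, dotProduct, Fin.sum_univ_two] at h0 h1
  ext i j
  fin_cases i <;> fin_cases j <;>
    simp [Matrix.vecMulVec_apply]
  · linear_combination (-X 0 0) * hks - s * h0
  · linear_combination (-X 0 1) * hks + k * h0
  · linear_combination (-X 1 0) * hks - s * h1
  · linear_combination (-X 1 1) * hks + k * h1

lemma mulVec_normSq {X : Matrix (Fin 2) (Fin 2) ℝ} {a b c : ℝ} (u v : ℝ)
    (h : Xᵀ * X = !![a, c; c, b]) :
    (X *ᵥ ![u, v]) 0 ^ 2 + (X *ᵥ ![u, v]) 1 ^ 2 = a * u ^ 2 + b * v ^ 2 + 2 * c * u * v := by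
  have e00 := congrFun (congrFun h 0) 0
  have e01 := congrFun (congrFun h 0) 1
  have e11 := congrFun (congrFun h 1) 1
  simp [Matrix.mul_apply, Fin.sum_univ_two] at e00 e01 e11
  simp [Matrix.mulVec, dotProduct, Fin.sum_univ_two]
  linear_combination u ^ 2 * e00 + v ^ 2 * e11 + 2 * u * v * e01

lemma rot2_mulVec (α θ : ℝ) : rot2 α *ᵥ ![-Real.sin θ, Real.cos θ]
    = ![-Real.sin (α + θ), Real.cos (α + θ)] := by
  ext i
  fin_cases i <;>
    simp [rot2, Matrix.mulVec, dotProduct, Fin.sum_univ_two, Real.sin_add, Real.cos_add] <;> ring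

lemma diagonal_mulVec_vec2 (p q u v : ℝ) :
    Matrix.diagonal ![p, q] *ᵥ ![u, v] = ![p * u, q * v] := by
  ext i
  fin_cases i <;> simp [Matrix.mulVec_diagonal]

/-- The quadratic form of `!![a, c; c, b]` at the unit vector `(-sin φ, cos φ)`, in terms of the
double angle. -/
lemma quad_double_angle (a b c φ : ℝ) :
    a * (-Real.sin φ) ^ 2 + b * Real.cos φ ^ 2 + 2 * c * (-Real.sin φ) * Real.cos φ
      = (a + b) / 2 - (a - b) / 2 * Real.cos (2 * φ) - c * Real.sin (2 * φ) := by
  rw [Real.cos_two_mul, Real.sin_two_mul]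
  linear_combination a * Real.sin_sq_add_cos_sq φ

/-- A well matrix and an element of `K̃^pc R_α` that stretch the interface direction equally can be
made compatible by rotating the former. -/
lemma exists_compatible {η₁ η₂ α θ p q a b c : ℝ} (h1 : 0 < η₁) (h2 : 0 < η₂)
    (hp : 0 < p) (hq : 0 < q) (hP : (a, b, c) ∈ Pset η₁ η₂)
    (h : (p * -Real.sin θ) ^ 2 + (q * Real.cos θ) ^ 2
      = a * (-Real.sin (α + θ)) ^ 2 + b * Real.cos (α + θ) ^ 2
        + 2 * c * (-Real.sin (α + θ)) * Real.cos (α + θ)) :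
    ∃ R : Matrix (Fin 2) (Fin 2) ℝ, IsSO2 R ∧ ∃ B ∈ Kpc η₁ η₂, ∃ v : Fin 2 → ℝ,
      R * Matrix.diagonal ![p, q] - B * rot2 α
        = Matrix.vecMulVec v ![Real.cos θ, Real.sin θ] := by
  have ha : 0 < a := hP.1
  have hdet : a * b - c ^ 2 = η₁ ^ 2 * η₂ ^ 2 := hP.2.2.1
  have hsa : 0 < Real.sqrt a := Real.sqrt_pos.2 ha
  have hsa2 : Real.sqrt a ^ 2 = a := Real.sq_sqrt ha.le
  -- Cholesky factor of the Gram matrix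
  obtain ⟨B, hBdet, hB⟩ : ∃ B : Matrix (Fin 2) (Fin 2) ℝ, 0 < B.det ∧
      Bᵀ * B = !![a, c; c, b] := by
    refine ⟨!![Real.sqrt a, c / Real.sqrt a; 0, η₁ * η₂ / Real.sqrt a], ?_, ?_⟩
    · rw [Matrix.det_fin_two_of]
      have : 0 < Real.sqrt a * (η₁ * η₂ / Real.sqrt a) := by positivity
      linarith
    · ext i j
      fin_cases i <;> fin_cases j <;> simp [Matrix.mul_apply, Fin.sum_univ_two]
      · linarith
      · field_simp
      · field_simp
      · field_simp
        rw [hsa2]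
        linarith
  have hu := mulVec_normSq (-Real.sin (α + θ)) (Real.cos (α + θ)) hB
  rw [← h] at hu
  have hsc := Real.sin_sq_add_cos_sq θ
  have hpos : 0 < (p * -Real.sin θ) ^ 2 + (q * Real.cos θ) ^ 2 := by
    rcases eq_or_ne (Real.sin θ) 0 with hs | hs
    · have : Real.cos θ ≠ 0 := by
        intro hc
        simp [hs, hc] at hsc
      positivity
    · have : 0 < (p * -Real.sin θ) ^ 2 := by
        rw [mul_neg, neg_sq]; positivity
      positivity
  obtain ⟨R, hR, hRu⟩ := exists_rotation hpos hu.symm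
  refine ⟨R, hR, B, ⟨hBdet, a, b, c, hP, hB⟩, _, eq_vecMulVec_of_mulVec_eq_zero hsc ?_⟩
  rw [Matrix.sub_mulVec, ← Matrix.mulVec_mulVec, ← Matrix.mulVec_mulVec, rot2_mulVec,
    diagonal_mulVec_vec2, hRu, sub_eq_zero]
  ext i
  fin_cases i <;> rfl

/-- Compatible matrices stretch the interface direction by the same factor. -/
lemma stretch_eq {R B : Matrix (Fin 2) (Fin 2) ℝ} {v : Fin 2 → ℝ} {α θ p q a b c : ℝ}
    (hR : IsSO2 R) (hB : Bᵀ * B = !![a, c; c, b])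
    (h : R * Matrix.diagonal ![p, q] - B * rot2 α
      = Matrix.vecMulVec v ![Real.cos θ, Real.sin θ]) :
    (p * -Real.sin θ) ^ 2 + (q * Real.cos θ) ^ 2
      = a * (-Real.sin (α + θ)) ^ 2 + b * Real.cos (α + θ) ^ 2
        + 2 * c * (-Real.sin (α + θ)) * Real.cos (α + θ) := by
  have hz : (R * Matrix.diagonal ![p, q] - B * rot2 α) *ᵥ ![-Real.sin θ, Real.cos θ] = 0 := by
    rw [h]
    ext i
    simp [Matrix.mulVec, dotProduct, Fin.sum_univ_two, Matrix.vecMulVec_apply]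
    ring
  rw [Matrix.sub_mulVec, ← Matrix.mulVec_mulVec, ← Matrix.mulVec_mulVec, rot2_mulVec,
    diagonal_mulVec_vec2, sub_eq_zero] at hz
  have hR1 : Rᵀ * R = !![1, 0; 0, 1] := by rw [hR.1, Matrix.one_fin_two]
  have e1 := mulVec_normSq (p * -Real.sin θ) (q * Real.cos θ) hR1
  have e2 := mulVec_normSq (-Real.sin (α + θ)) (Real.cos (α + θ)) hB
  rw [hz, e2] at e1
  linarith

/-! ### The characterization -/

/-- The values at `(-sin φ, cos φ)` of the Gram matrices in `P` fill the interval
`[M - D f(s), M + D s]`, where `s = |cos 2φ|`. -/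
lemma exists_Pset_iff {η₁ η₂ M D φ v : ℝ} (h1 : 0 < η₁) (h2 : η₁ < η₂)
    (hM : M = (η₁ ^ 2 + η₂ ^ 2) / 2) (hD : D = (η₂ ^ 2 - η₁ ^ 2) / 2) :
    (∃ a b c : ℝ, (a, b, c) ∈ Pset η₁ η₂ ∧ v = a * (-Real.sin φ) ^ 2 + b * Real.cos φ ^ 2
        + 2 * c * (-Real.sin φ) * Real.cos φ) ↔
      M - D * fBC (η₂ / η₁) |Real.cos (2 * φ)| ≤ v ∧ v ≤ M + D * |Real.cos (2 * φ)| := by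
  have hxy := Real.cos_sq_add_sin_sq (2 * φ)
  have hMDη : M ^ 2 - D ^ 2 = η₁ ^ 2 * η₂ ^ 2 := by subst hM hD; ring
  have hη : 0 < η₁ ^ 2 * η₂ ^ 2 := by
    have : 0 < η₂ := h1.trans h2
    positivity
  simp only [quad_double_angle]
  constructor
  · rintro ⟨a, b, c, ⟨ha, hb, hdet, hle⟩, rfl⟩
    simp only at ha hb hdet hle
    exact value_bounds h1 h2 hM hD hxy (by linarith) (by rw [hMDη]; linear_combination hdet)
      (by linarith)
  · rintro ⟨hv, hv'⟩
    obtain ⟨m, r, c, hm, hdet, hle, hval⟩ := value_attained h1 h2 hM hD hxy hv hv'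
    have hrm : |r| < m := by
      apply abs_lt_of_sq_lt_sq _ hm.le
      nlinarith [sq_nonneg c]
    obtain ⟨hr1, hr2⟩ := abs_lt.1 hrm
    refine ⟨m + r, m - r, c, ⟨?_, ?_, ?_, ?_⟩, ?_⟩
    · simp only; linarith
    · simp only; linarith
    · simp only
      rw [← hMDη]
      linear_combination hdet
    · simp only; linarith
    · rw [← hval]; ring

/-- Characterization: a pure variant F̃ ∈ K̃ is compatible with some
Ã ∈ K̃^pc·R̃_α across an interface with normal ñ = (cos θ, sin θ) if and only if
|cos 2θ| ≤ f(|cos 2(α + θ)|). -/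
theorem compatibility_characterization (η₁ η₂ α θ : ℝ)
    (h1 : 0 < η₁) (h2 : η₁ < η₂) (hα0 : 0 < α) (hα1 : α < Real.pi / 2) :
    (∃ (F A : Matrix (Fin 2) (Fin 2) ℝ) (a : Fin 2 → ℝ),
        F ∈ Ktilde η₁ η₂ ∧
        (∃ B ∈ Kpc η₁ η₂, A = B * rot2 α) ∧
        F - A = Matrix.vecMulVec a ![Real.cos θ, Real.sin θ]) ↔
      |Real.cos (2 * θ)| ≤ fBC (η₂ / η₁) |Real.cos (2 * (α + θ))| := by
  obtain ⟨M, hM⟩ : ∃ M, M = (η₁ ^ 2 + η₂ ^ 2) / 2 := ⟨_, rfl⟩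
  obtain ⟨D, hD⟩ : ∃ D, D = (η₂ ^ 2 - η₁ ^ 2) / 2 := ⟨_, rfl⟩
  have h3 : 0 < η₂ := h1.trans h2
  have hD0 : 0 < D := by subst hD; nlinarith
  have hsf := le_fBC (X := |Real.cos (2 * (α + θ))|) h1 h2 hM hD
    (abs_nonneg (Real.sin (2 * (α + θ)))) (by simp)
  have hw1 : (η₂ * -Real.sin θ) ^ 2 + (η₁ * Real.cos θ) ^ 2 = M - D * Real.cos (2 * θ) := by
    rw [Real.cos_two_mul, hM, hD]
    linear_combination η₂ ^ 2 * Real.sin_sq_add_cos_sq θ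
  have hw2 : (η₁ * -Real.sin θ) ^ 2 + (η₂ * Real.cos θ) ^ 2 = M + D * Real.cos (2 * θ) := by
    rw [Real.cos_two_mul, hM, hD]
    linear_combination η₁ ^ 2 * Real.sin_sq_add_cos_sq θ
  constructor
  · rintro ⟨F, A, v, ⟨R, hR, hF⟩, ⟨B, ⟨-, a, b, c, hP, hB⟩, rfl⟩, hFA⟩
    rcases hF with rfl | rfl
    · have hst := stretch_eq hR hB hFA
      obtain ⟨k1, k2⟩ := (exists_Pset_iff h1 h2 hM hD).1 ⟨a, b, c, hP, hst⟩
      rw [hw1] at k1 k2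
      refine abs_le.2 ⟨?_, ?_⟩ <;> nlinarith
    · have hst := stretch_eq hR hB hFA
      obtain ⟨k1, k2⟩ := (exists_Pset_iff h1 h2 hM hD).1 ⟨a, b, c, hP, hst⟩
      rw [hw2] at k1 k2
      refine abs_le.2 ⟨?_, ?_⟩ <;> nlinarith
  · intro h
    -- the well for which the squared stretch of the interface direction is `M - D |cos 2θ|`
    have hs0 := abs_nonneg (Real.cos (2 * (α + θ)))
    have hval : M - D * fBC (η₂ / η₁) |Real.cos (2 * (α + θ))| ≤ M - D * |Real.cos (2 * θ)| ∧
        M - D * |Real.cos (2 * θ)| ≤ M + D * |Real.cos (2 * (α + θ))| :=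
      ⟨by nlinarith, by nlinarith [abs_nonneg (Real.cos (2 * θ))]⟩
    obtain ⟨a, b, c, hP, hv⟩ := (exists_Pset_iff h1 h2 hM hD).2 hval
    rcases abs_choice (Real.cos (2 * θ)) with hc | hc
    · rw [hc, ← hw1] at hv
      obtain ⟨R, hR, B, hB, v, hv⟩ := exists_compatible h1 h3 h3 h1 hP hv
      exact ⟨_, _, v, ⟨R, hR, Or.inl rfl⟩, ⟨B, hB, rfl⟩, hv⟩
    · rw [hc, mul_neg, sub_neg_eq_add, ← hw2] at hv
      obtain ⟨R, hR, B, hB, v, hv⟩ := exists_compatible h1 h3 h1 h3 hP hv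
      exact ⟨_, _, v, ⟨R, hR, Or.inr rfl⟩, ⟨B, hB, rfl⟩, hv⟩
end

section
/- Let τ > 1 with τ² < 1 + √2, and let f be the associated function. Then {θ ∈ ℝ : f(|cos 2θ|) < |cos 2(θ + π/4)|} = ⋃_{j ∈ ℤ} ((4j + 1)π/8, (4j + 3)π/8). (Note that |cos 2(θ + π/4)| = |sin 2θ|.) -/
/-- The cosine is negative exactly on the translates by `2πj` of `(π/2, 3π/2)`; here this is
written at `4θ`. -/
lemma cos_four_mul_neg_iff (θ : ℝ) :
    Real.cos (4 * θ) < 0 ↔ ∃ j : ℤ, (4 * (j : ℝ) + 1) * Real.pi / 8 < θ ∧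
      θ < (4 * (j : ℝ) + 3) * Real.pi / 8 := by
  have hpi := Real.pi_pos
  have shift (j : ℤ) : Real.cos (4 * θ) = Real.cos (4 * θ - j * (2 * Real.pi)) :=
    (Real.cos_sub_int_mul_two_pi _ j).symm
  constructor
  · intro h
    have h1 : (⌊4 * θ / (2 * Real.pi)⌋ : ℝ) * (2 * Real.pi) ≤ 4 * θ :=
      (le_div_iff₀ (by positivity)).1 (Int.floor_le _)
    have h2 : 4 * θ < ((⌊4 * θ / (2 * Real.pi)⌋ : ℝ) + 1) * (2 * Real.pi) :=
      (div_lt_iff₀ (by positivity)).1 (Int.lt_floor_add_one _)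
    generalize ⌊4 * θ / (2 * Real.pi)⌋ = j at h1 h2
    refine ⟨j, ?_, ?_⟩
    · by_contra! hc
      have := Real.cos_nonneg_of_neg_pi_div_two_le_of_le
        (x := 4 * θ - j * (2 * Real.pi)) (by linarith) (by linarith)
      linarith [shift j]
    · by_contra! hc
      have := Real.cos_nonneg_of_neg_pi_div_two_le_of_le
        (x := 4 * θ - j * (2 * Real.pi) - 2 * Real.pi) (by linarith) (by linarith)
      rw [Real.cos_sub_two_pi] at this
      linarith [shift j]
  · rintro ⟨j, h1, h2⟩
    rw [shift j]
    exact Real.cos_neg_of_pi_div_two_lt_of_lt (by linarith) (by linarith)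

/-- On the unit circle in the first quadrant, `f(c) < d` holds exactly when `c < d`. -/
lemma fBC_lt_iff {τ c d : ℝ} (hτ : 1 < τ) (hτ2 : τ ^ 2 < 1 + Real.sqrt 2)
    (hc : 0 ≤ c) (hd : 0 ≤ d) (hcd : c ^ 2 + d ^ 2 = 1) : fBC τ c < d ↔ c < d := by
  unfold fBC
  split_ifs with h
  · have hsqrt : Real.sqrt (1 - c ^ 2) = d := by
      rw [← hcd, add_sub_cancel_left, Real.sqrt_sq hd]
    have ht : 1 < τ ^ 2 := by nlinarith
    have h4 : τ ^ 4 = (τ ^ 2) ^ 2 := by ring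
    rw [hsqrt]
    rw [h4] at h ⊢
    generalize τ ^ 2 = t at *
    have hq : t ^ 2 - 2 * t - 1 < 0 := by
      nlinarith [Real.sq_sqrt (show (0 : ℝ) ≤ 2 by norm_num), Real.sqrt_nonneg 2]
    have hp : 0 < t ^ 2 - 1 := by nlinarith
    have hs : c * (t ^ 2 + 1) ≤ t ^ 2 - 1 := (le_div_iff₀ (by positivity)).1 h
    have hd' : 2 * t ≤ d * (t ^ 2 + 1) := by
      refine (sq_le_sq₀ (by positivity) (by positivity)).1 ?_
      have hs2 : (c * (t ^ 2 + 1)) ^ 2 ≤ (t ^ 2 - 1) ^ 2 :=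
        pow_le_pow_left₀ (by positivity) hs 2
      have hd2 : d ^ 2 = 1 - c ^ 2 := by linarith
      rw [mul_pow d, hd2]
      linarith
    have hlt : c < d := by
      refine lt_of_mul_lt_mul_right (a := t ^ 2 + 1) ?_ (by positivity)
      linarith
    refine iff_of_true ?_ hlt
    rw [div_lt_iff₀ hp]
    refine lt_of_mul_lt_mul_right (a := t ^ 2 + 1) ?_ (by positivity)
    have h1 : 2 * t * (t ^ 2 + 2 * t - 1) ≤ d * (t ^ 2 + 1) * (t ^ 2 + 2 * t - 1) :=
      mul_le_mul_of_nonneg_right hd' (by linarith)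
    have h2 : (t ^ 2 - 1) * (t ^ 2 - 2 * t - 1) < 0 := mul_neg_of_pos_of_neg hp hq
    linarith
  · rfl


/-- For α = π/4 and τ² < 1 + √2, the set E₂ is the union over j ∈ ℤ of the
intervals ((4j+1)π/8, (4j+3)π/8). -/
theorem E2_for_alpha_pi_div_four (τ : ℝ) (hτ : 1 < τ)
    (hτ2 : τ ^ 2 < 1 + Real.sqrt 2) :
    {θ : ℝ | fBC τ |Real.cos (2 * θ)| < |Real.cos (2 * (θ + Real.pi / 4))|} =
      ⋃ j : ℤ, Set.Ioo ((4 * (j : ℝ) + 1) * Real.pi / 8)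
        ((4 * (j : ℝ) + 3) * Real.pi / 8) := by
  ext θ
  have hsin : Real.cos (2 * (θ + Real.pi / 4)) = -Real.sin (2 * θ) := by
    rw [← Real.cos_add_pi_div_two]
    ring_nf
  have hcos : Real.cos (4 * θ) = Real.cos (2 * θ) ^ 2 - Real.sin (2 * θ) ^ 2 := by
    rw [← Real.cos_two_mul']
    ring_nf
  simp only [Set.mem_ofPred_eq, Set.mem_iUnion, Set.mem_Ioo]
  rw [hsin, abs_neg, fBC_lt_iff hτ hτ2 (abs_nonneg _) (abs_nonneg _)
    (by rw [sq_abs, sq_abs, Real.cos_sq_add_sin_sq]), ← sq_lt_sq, ← sub_neg, ← hcos,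
    cos_four_mul_neg_iff]
end
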